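/- Let n ≥ 2, k ≥ 2, N > 0, and let {(β_i,θ_i)}_{i=1}^{k+1} be a 1/N-quadrature rule exact for Λ_{n,k}, with nodes -1 ≤ β_1 < ⋯ < β_{k+1} < 1 and weights θ_i > 0. Then for every j with 0 ≤ j ≤ k-2, the partial product q_j(t) = ∏_{i=1}^j (t-β_i) is positive definite; that is, ∫ q_j·P_m^{(n)} dμ_n ≥ 0 for every m ≥ 0. -/

import Mathlib

open MeasureTheory Finset
open scoped Classical

/-- The (unnormalized) Gegenbauer weight `(1 - t²)^((n-3)/2)`. -/
noncomputable def gegWeight (n : ℕ) (t : ℝ) : ℝ := (1 - t ^ 2) ^ (((n : ℝ) - 3) / 2)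

/-- Integration against the probability measure `μ_n` on `[-1,1]` with density
proportional to `(1 - t²)^((n-3)/2)`. -/
noncomputable def gegInt (n : ℕ) (f : ℝ → ℝ) : ℝ :=
  (∫ t in Set.Icc (-1 : ℝ) 1, gegWeight n t)⁻¹ *
    ∫ t in Set.Icc (-1 : ℝ) 1, f t * gegWeight n t

/-- `P : ℕ → ℝ[X]` is the family of Gegenbauer polynomials for dimension `n`:
`deg P_i = i`, `P_i(1) = 1`, pairwise orthogonal in `L²(μ_n)`. -/
def IsGegenbauer (n : ℕ) (P : ℕ → Polynomial ℝ) : Prop :=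
  (∀ i, (P i).natDegree = i) ∧ (∀ i, (P i).eval 1 = 1) ∧
    ∀ i j, i ≠ j → gegInt n (fun t => (P i).eval t * (P j).eval t) = 0

/-- A `1/N`-quadrature rule with nodes `α` and weights `ρ`, exact for a set `Λ`
of functions on `[-1,1]`. -/
def IsQuadratureRule (n : ℕ) (N : ℝ) {k : ℕ} (α ρ : Fin k → ℝ)
    (Λ : Set (ℝ → ℝ)) : Prop :=
  (∀ i, -1 ≤ α i) ∧ (∀ i, α i < 1) ∧ StrictMono α ∧ (∀ i, 0 < ρ i) ∧
    ∀ f ∈ Λ, gegInt n f = f 1 / N + ∑ i, ρ i * f (α i)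

/-- Membership of a polynomial in `Λ_{n,k} = 𝒫_{2k-1} ⊕ span{P_{2k+2}, P_{2k+3}}`:
degree at most `2k+3` and orthogonality to `P_{2k}` and `P_{2k+1}` in `L²(μ_n)`. -/
def InLambda (n k : ℕ) (P : ℕ → Polynomial ℝ) (p : Polynomial ℝ) : Prop :=
  p.natDegree ≤ 2 * k + 3 ∧
    gegInt n (fun t => p.eval t * (P (2 * k)).eval t) = 0 ∧
    gegInt n (fun t => p.eval t * (P (2 * k + 1)).eval t) = 0

/-- The space `Λ_{n,k}`, as a set of functions on `ℝ`. -/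
def LambdaSpace (n k : ℕ) (P : ℕ → Polynomial ℝ) : Set (ℝ → ℝ) :=
  {f | ∃ p : Polynomial ℝ, InLambda n k P p ∧ f = fun t => p.eval t}

/-!
Orthogonality of the `P_m` for `μ_n` settles the case `m ≥ j`, so let `m < j`.

By exactness, `μ_n` and the quadrature rule define functionals `G` and `L` that agree on polynomials
of degree less than `2k`, so the `P_m` with `m ≤ k` are orthogonal polynomials for `L` as well. The
zeros of an orthogonal polynomial of `L` are at most `1`, so normalisation at `1` makes the leading
coefficient of `P_m` positive.

Because the nodes increase, `q_i` is nonnegative at every node and at `1`, hence each functional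
`f ↦ L (q_i f)` is positive semidefinite. By Christoffel's formula, an orthogonal polynomial of
degree `m` for a functional `M` is a nonnegative combination of orthogonal polynomials of degrees
`m` and `m - 1` for `f ↦ M ((X - a) f)`, when both functionals are positive semidefinite. Applying
this at `β_1, …, β_j` in turn reduces `L (q_j P_m) ≥ 0` to the values on orthogonal polynomials of
the functional `f ↦ L (q_j f)` itself, where only constants contribute.
-/

open Polynomial

lemma degree_X_pow_sub_of_degree_lt {R : Type*} [Ring R] [Nontrivial R] {u : R[X]} {d : ℕ}
    (hu : u.degree < d) : (X ^ d - u : R[X]).degree = d := by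
  rw [degree_sub_eq_left_of_degree_lt (by rwa [degree_X_pow]), degree_X_pow]

/-- A linear functional on polynomials, thought of as integration against a signed measure. -/
abbrev MomentFunctional (R : Type*) [CommSemiring R] := R[X] →ₗ[R] R

namespace MomentFunctional

section CommRing

variable {R : Type*} [CommRing R] {L : MomentFunctional R} {d : ℕ} {p r s : R[X]}

/-- `L.withDensity q` is the functional `f ↦ L (q f)`, i.e. the measure of `L` multiplied by the
density `q`. -/
noncomputable def withDensity (L : MomentFunctional R) (q : R[X]) : MomentFunctional R :=
  L ∘ₗ LinearMap.mulLeft R q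

@[simp]
lemma withDensity_apply (L : MomentFunctional R) (q f : R[X]) : L.withDensity q f = L (q * f) :=
  rfl

lemma withDensity_one (L : MomentFunctional R) : L.withDensity 1 = L := by
  ext; simp

lemma withDensity_mul (L : MomentFunctional R) (q r : R[X]) :
    L.withDensity (q * r) = (L.withDensity q).withDensity r :=
  LinearMap.ext fun f => by simp [mul_assoc]

/-- `p` is orthogonal, for the symmetric form `(f, g) ↦ L (f g)`, to all polynomials of degree less
than `d`. The degree of `p` itself is not constrained. -/
def OrthogonalBelow (L : MomentFunctional R) (d : ℕ) (p : R[X]) : Prop :=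
  ∀ s : R[X], s.degree < d → L (p * s) = 0

namespace OrthogonalBelow

lemma zero (L : MomentFunctional R) (p : R[X]) : L.OrthogonalBelow 0 p := by
  intro s hs
  rw [Nat.cast_zero, ← not_le, zero_le_degree_iff, not_ne_iff] at hs
  rw [hs, mul_zero, map_zero]

lemma sub (hp : L.OrthogonalBelow d p) (hr : L.OrthogonalBelow d r) :
    L.OrthogonalBelow d (p - r) := fun s hs => by
  rw [sub_mul, map_sub, hp s hs, hr s hs, sub_zero]

lemma smul (c : R) (hp : L.OrthogonalBelow d p) : L.OrthogonalBelow d (c • p) := fun s hs => by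
  rw [smul_mul_assoc, map_smul, hp s hs, smul_zero]

lemma congr_of_natDegree_lt {L' : MomentFunctional R} (hp : L.OrthogonalBelow d p)
    (hpd : p.natDegree ≤ d) (h : ∀ f : R[X], f.natDegree < 2 * d → L f = L' f) :
    L'.OrthogonalBelow d p := by
  intro s hs
  obtain rfl | hs0 := eq_or_ne s 0
  · rw [mul_zero, map_zero]
  have hsd : s.natDegree < d := (natDegree_lt_iff_degree_lt hs0).mpr hs
  have hmul : (p * s).natDegree ≤ p.natDegree + s.natDegree := natDegree_mul_le
  rw [← h _ (by lia), hp s hs]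

lemma withDensity_X_sub_C [Nontrivial R] (hp : L.OrthogonalBelow (d + 1) p) (a : R) :
    (L.withDensity (X - C a)).OrthogonalBelow d p := by
  intro s hs
  rw [withDensity_apply, mul_left_comm]
  apply hp
  rw [(monic_X_sub_C a).degree_mul_comm, (monic_X_sub_C a).degree_mul, degree_X_sub_C,
    Nat.cast_succ]
  exact WithBot.add_lt_add_right WithBot.one_ne_bot hs

/- Modulo polynomials of degree less than `d`, every polynomial of degree at most `d` is determined
by its coefficient of `X ^ d`. -/
lemma coeff_mul_apply (hp : L.OrthogonalBelow d p) (hr : r.natDegree ≤ d) (hs : s.natDegree ≤ d) :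
    r.coeff d * L (p * s) = s.coeff d * L (p * r) := by
  have hdeg : (r.coeff d • s - s.coeff d • r).degree < d := by
    rw [degree_lt_iff_coeff_zero]
    intro i hi
    obtain rfl | hi := hi.eq_or_lt
    · simp [mul_comm]
    · simp [coeff_eq_zero_of_natDegree_lt (hr.trans_lt hi),
        coeff_eq_zero_of_natDegree_lt (hs.trans_lt hi)]
  have h := hp _ hdeg
  simpa only [mul_sub, mul_smul_comm, map_sub, map_smul, smul_eq_mul, sub_eq_zero] using h

lemma succ [NoZeroDivisors R] (hp : L.OrthogonalBelow d p) (hr : r.degree = d)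
    (hpr : L (p * r) = 0) : L.OrthogonalBelow (d + 1) p := by
  intro s hs
  have hrd : r.natDegree = d := natDegree_eq_of_degree_eq_some hr
  have h := hp.coeff_mul_apply hrd.le (natDegree_le_of_degree_le (Order.lt_succ_iff.mp hs))
  rw [hpr, mul_zero] at h
  exact (mul_eq_zero.mp h).resolve_left (coeff_ne_zero_of_eq_degree hr)

lemma of_forall_lt_degree_eq [NoZeroDivisors R] {P : ℕ → R[X]} (hP : ∀ i, (P i).degree = i)
    (h : ∀ i < d, L (p * P i) = 0) : L.OrthogonalBelow d p := by
  induction d with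
  | zero => exact .zero L p
  | succ d ih => exact (ih fun i hi => h i (by lia)).succ (hP d) (h d d.lt_succ_self)

end OrthogonalBelow

end CommRing

section OrderedField

variable {𝕜 : Type*} [Field 𝕜] [LinearOrder 𝕜] {L : MomentFunctional 𝕜} {a : 𝕜} {d : ℕ}
  {p q r : 𝕜[X]}

/-- The symmetric form `(f, g) ↦ L (f g)` is positive semidefinite. -/
def IsPosSemidef (L : MomentFunctional 𝕜) : Prop := ∀ f, 0 ≤ L (f * f)

/-- `p` is an orthogonal polynomial for `L`, normalised only by the sign of its leading coefficient.
`L` may be degenerate, so `L (p * p) = 0` is allowed. -/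
structure IsOrthogonalPolynomial (L : MomentFunctional 𝕜) (p : 𝕜[X]) : Prop where
  leadingCoeff_pos : 0 < p.leadingCoeff
  orthogonalBelow : L.OrthogonalBelow p.natDegree p

section Positivity

variable [IsStrictOrderedRing 𝕜]

lemma IsPosSemidef.apply_mul_eq_zero (hL : L.IsPosSemidef) (hp : L (p * p) = 0) (q : 𝕜[X]) :
    L (p * q) = 0 := by
  let B : LinearMap.BilinForm 𝕜 𝕜[X] := (LinearMap.mul 𝕜 𝕜[X]).compr₂ L
  have hB : LinearMap.IsSymm B := ⟨fun f g => congrArg L (mul_comm f g)⟩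
  exact LinearMap.congr_fun ((B.apply_apply_same_eq_zero_iff hL hB).mp hp) q

/- When `L (r * r) = 0` the junk value of the quotient is harmless, since then `L (p * r) = 0`. -/
lemma OrthogonalBelow.sub_projection (hL : L.IsPosSemidef) (hp : L.OrthogonalBelow d p)
    (hr : L.OrthogonalBelow d r) (hrd : r.degree = d) :
    L.OrthogonalBelow (d + 1) (p - (L (p * r) / L (r * r)) • r) := by
  refine (hp.sub (hr.smul _)).succ hrd ?_
  have hdegenerate : L (r * r) = 0 → L (p * r) = 0 := fun h => by
    rw [mul_comm, hL.apply_mul_eq_zero h]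
  rw [sub_mul, smul_mul_assoc, map_sub, map_smul, smul_eq_mul, div_mul_cancel_of_imp hdegenerate,
    sub_self]

lemma IsPosSemidef.exists_orthogonalBelow_sub (hL : L.IsPosSemidef) (d : ℕ) :
    ∀ p : 𝕜[X], ∃ q : 𝕜[X], q.degree < d ∧ L.OrthogonalBelow d (p - q) := by
  induction d with
  | zero => exact fun p => ⟨0, by simp, .zero L _⟩
  | succ d ih =>
    intro p
    obtain ⟨u, hud, hu⟩ := ih (X ^ d)
    obtain ⟨q, hqd, hq⟩ := ih p
    have hrd : (X ^ d - u).degree = (d : WithBot ℕ) := degree_X_pow_sub_of_degree_lt hud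
    have hd : (d : WithBot ℕ) < (d + 1 : ℕ) := mod_cast d.lt_succ_self
    refine ⟨q + (L ((p - q) * (X ^ d - u)) / L ((X ^ d - u) * (X ^ d - u))) • (X ^ d - u), ?_, ?_⟩
    · exact (degree_add_le _ _).trans_lt
        (max_lt (hqd.trans hd) ((degree_smul_le _ _).trans_lt (hrd.trans_lt hd)))
    · rw [← sub_sub]
      exact hq.sub_projection hL hu hrd

lemma IsPosSemidef.exists_isOrthogonalPolynomial (hL : L.IsPosSemidef) (d : ℕ) :
    ∃ p : 𝕜[X], p.degree = d ∧ L.IsOrthogonalPolynomial p := by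
  obtain ⟨u, hud, hu⟩ := hL.exists_orthogonalBelow_sub d (X ^ d)
  have hdeg : (X ^ d - u).degree = (d : WithBot ℕ) := degree_X_pow_sub_of_degree_lt hud
  refine ⟨X ^ d - u, hdeg, ?_, ?_⟩
  · rw [(monic_X_pow_sub hud).leadingCoeff]
    exact one_pos
  · rwa [natDegree_eq_of_degree_eq_some hdeg]

lemma IsOrthogonalPolynomial.apply_mul_nonneg_of_natDegree_eq (hL : L.IsPosSemidef)
    (hp : L.IsOrthogonalPolynomial p) (hdeg : q.natDegree = p.natDegree)
    (hq : 0 ≤ q.leadingCoeff) : 0 ≤ L (p * q) := by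
  refine nonneg_of_mul_nonneg_right ?_ hp.leadingCoeff_pos
  rw [leadingCoeff, hp.orthogonalBelow.coeff_mul_apply le_rfl hdeg.le, ← hdeg]
  exact mul_nonneg hq (hL p)

/- Christoffel's formula: the coefficient of `r` has the sign of
`L ((X - a) p r) = L (p · (X - a) r)`, where `(X - a) r` has the degree of `p`. -/
lemma IsOrthogonalPolynomial.exists_eq_add_smul (hL : L.IsPosSemidef)
    (hLa : (L.withDensity (X - C a)).IsPosSemidef) (hp : L.IsOrthogonalPolynomial p) :
    ∃ (c : 𝕜) (s r : 𝕜[X]), 0 ≤ c ∧ (L.withDensity (X - C a)).IsOrthogonalPolynomial s ∧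
      (L.withDensity (X - C a)).IsOrthogonalPolynomial r ∧ p = s + c • r := by
  rcases hd : p.natDegree with _ | d
  · have hpa : (L.withDensity (X - C a)).IsOrthogonalPolynomial p :=
      ⟨hp.leadingCoeff_pos, hd ▸ .zero _ p⟩
    exact ⟨0, p, p, le_rfl, hpa, hpa, by simp⟩
  obtain ⟨r, hrd, hr⟩ := hLa.exists_isOrthogonalPolynomial d
  have hrd' : r.natDegree = d := natDegree_eq_of_degree_eq_some hrd
  set M := L.withDensity (X - C a) with hM
  set c := M (p * r) / M (r * r)
  have hlt : (c • r).degree < p.degree := by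
    refine (degree_smul_le _ _).trans_lt (degree_lt_degree ?_)
    lia
  have hc0 : 0 ≤ c := by
    refine div_nonneg ?_ (hLa r)
    rw [hM, withDensity_apply, mul_left_comm]
    refine hp.apply_mul_nonneg_of_natDegree_eq hL ?_ ?_
    · rw [(monic_X_sub_C a).natDegree_mul' (leadingCoeff_ne_zero.mp hr.leadingCoeff_pos.ne'),
        natDegree_X_sub_C, hrd', hd, add_comm]
    · rw [leadingCoeff_mul, leadingCoeff_X_sub_C, one_mul]
      exact hr.leadingCoeff_pos.le
  have hs : M.OrthogonalBelow (d + 1) (p - c • r) :=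
    OrthogonalBelow.sub_projection hLa ((hd ▸ hp.orthogonalBelow).withDensity_X_sub_C a)
      (hrd' ▸ hr.orthogonalBelow) hrd
  refine ⟨c, p - c • r, r, hc0, ⟨?_, ?_⟩, hr, (sub_add_cancel _ _).symm⟩
  · rw [leadingCoeff_sub_of_degree_lt hlt]
    exact hp.leadingCoeff_pos
  · rwa [natDegree_eq_of_degree_eq (degree_sub_eq_left_of_degree_lt hlt), hd]

lemma IsOrthogonalPolynomial.apply_nonneg (hL : L.IsPosSemidef)
    (hp : L.IsOrthogonalPolynomial p) : 0 ≤ L p := by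
  obtain hd | hd := Nat.eq_zero_or_pos p.natDegree
  · simpa using hp.apply_mul_nonneg_of_natDegree_eq (q := 1) hL (by simp [hd]) (by simp)
  · have h := hp.orthogonalBelow 1 (by simpa using hd)
    rw [← mul_one p, h]

/- Downward induction on the number of linear factors absorbed into the density. -/
lemma IsOrthogonalPolynomial.apply_mul_nonneg_of_chain {Q : ℕ → 𝕜[X]} {j : ℕ} (hQ0 : Q 0 = 1)
    (hQ : ∀ i < j, ∃ a, Q (i + 1) = Q i * (X - C a))
    (hpos : ∀ i ≤ j, (L.withDensity (Q i)).IsPosSemidef) (hp : L.IsOrthogonalPolynomial p) :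
    0 ≤ L (Q j * p) := by
  suffices h : ∀ p, (L.withDensity (Q 0)).IsOrthogonalPolynomial p → 0 ≤ L (Q j * p) by
    refine h p ?_
    rwa [hQ0, withDensity_one]
  refine Nat.decreasingInduction
    (motive := fun i _ => ∀ p, (L.withDensity (Q i)).IsOrthogonalPolynomial p → 0 ≤ L (Q j * p))
    (fun i hi ih p hp => ?_) (fun _ hp => (hp.apply_nonneg (hpos j le_rfl) :)) j.zero_le
  obtain ⟨a, ha⟩ := hQ i hi
  have hpos' := hpos (i + 1) hi
  rw [ha, withDensity_mul] at ih hpos'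
  obtain ⟨c, s, r, hc, hs, hr, rfl⟩ := hp.exists_eq_add_smul (hpos i hi.le) hpos'
  rw [mul_add, map_add, mul_smul_comm, map_smul, smul_eq_mul]
  exact add_nonneg (ih s hs) (mul_nonneg hc (ih r hr))

/- Writing `p = (X - x) g`, orthogonality of `p` to `g` forces `L ((x - X) g ^ 2) = 0`, which
positivity rules out for `a < x`. -/
lemma OrthogonalBelow.le_of_isRoot {x : 𝕜} (hLa : (L.withDensity (C a - X)).IsPosSemidef)
    (hL : ∀ f, f.eval a ≠ 0 → 0 < L (f * f)) (hp : L.OrthogonalBelow p.natDegree p)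
    (hpa : p.eval a ≠ 0) (hx : p.IsRoot x) : x ≤ a := by
  by_contra! hax
  obtain ⟨g, rfl⟩ := dvd_iff_isRoot.mpr hx
  have hg0 : g ≠ 0 := by rintro rfl; simp at hpa
  have hga : g.eval a ≠ 0 := by
    rw [eval_mul] at hpa
    exact right_ne_zero_of_mul hpa
  have horth : L ((X - C x) * g * g) = 0 := by
    refine hp g ?_
    rw [natDegree_mul (X_sub_C_ne_zero x) hg0, natDegree_X_sub_C, ← natDegree_lt_iff_degree_lt hg0]
    lia
  have hsplit : (X - C x) * g * g = -((C a - X) * (g * g)) - (x - a) • (g * g) := by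
    rw [smul_eq_C_mul, C_sub]
    ring
  rw [hsplit, map_sub, map_neg, map_smul, smul_eq_mul] at horth
  have hnonneg : 0 ≤ L ((C a - X) * (g * g)) := hLa g
  linarith [mul_pos (sub_pos.mpr hax) (hL g hga)]

end Positivity

end OrderedField

lemma OrthogonalBelow.leadingCoeff_pos {L : MomentFunctional ℝ} {a : ℝ} {p : ℝ[X]}
    (hLa : (L.withDensity (C a - X)).IsPosSemidef) (hL : ∀ f, f.eval a ≠ 0 → 0 < L (f * f))
    (hp : L.OrthogonalBelow p.natDegree p) (hpa : 0 < p.eval a) : 0 < p.leadingCoeff := by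
  by_contra! hlc
  exact hpa.not_ge (eval_le_zero_of_roots_le_of_leadingCoeff_nonpos
    (fun x hx => hp.le_of_isRoot hLa hL hpa.ne' hx) hlc)

end MomentFunctional

section Quadrature

variable {K : ℕ} {N : ℝ} {β θ : Fin K → ℝ}

/-- The right-hand side `f ↦ f(1)/N + ∑ θ_i f(β_i)` of a `1/N`-quadrature rule. -/
noncomputable def quadratureFunctional (N : ℝ) (β θ : Fin K → ℝ) : MomentFunctional ℝ :=
  N⁻¹ • leval 1 + ∑ i, θ i • leval (β i)

lemma quadratureFunctional_apply (N : ℝ) (β θ : Fin K → ℝ) (f : ℝ[X]) :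
    quadratureFunctional N β θ f = f.eval 1 / N + ∑ i, θ i * f.eval (β i) := by
  simp [quadratureFunctional, div_eq_inv_mul]

lemma quadratureFunctional_withDensity_isPosSemidef (hN : 0 ≤ N) (hθ : ∀ i, 0 ≤ θ i) {q : ℝ[X]}
    (hq1 : 0 ≤ q.eval 1) (hqβ : ∀ i, 0 ≤ q.eval (β i)) :
    ((quadratureFunctional N β θ).withDensity q).IsPosSemidef := by
  intro f
  simp only [MomentFunctional.withDensity_apply, quadratureFunctional_apply, eval_mul]
  exact add_nonneg (div_nonneg (mul_nonneg hq1 (mul_self_nonneg _)) hN)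
    (sum_nonneg fun i _ => mul_nonneg (hθ i) (mul_nonneg (hqβ i) (mul_self_nonneg _)))

lemma quadratureFunctional_mul_self_pos (hN : 0 < N) (hθ : ∀ i, 0 ≤ θ i) {f : ℝ[X]}
    (hf : f.eval 1 ≠ 0) : 0 < quadratureFunctional N β θ (f * f) := by
  simp only [quadratureFunctional_apply, eval_mul]
  exact add_pos_of_pos_of_nonneg (div_pos (mul_self_pos.mpr hf) hN)
    (sum_nonneg fun i _ => mul_nonneg (hθ i) (mul_self_nonneg _))

/-- The partial product `q_j = ∏_{i ≤ j} (X - β_i)`, with nodes indexed from `0`. For `j > K` this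
is the product over all nodes. -/
noncomputable def partialNodal (β : Fin K → ℝ) (j : ℕ) : ℝ[X] :=
  Lagrange.nodal (univ.filter fun i : Fin K => (i : ℕ) < j) β

lemma eval_partialNodal (β : Fin K → ℝ) (j : ℕ) (t : ℝ) :
    (partialNodal β j).eval t = ∏ i ∈ univ.filter (fun i : Fin K => (i : ℕ) < j), (t - β i) :=
  Lagrange.eval_nodal

lemma partialNodal_zero (β : Fin K → ℝ) : partialNodal β 0 = 1 := by
  simp [partialNodal]

lemma partialNodal_succ (β : Fin K → ℝ) {j : ℕ} (hj : j < K) :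
    partialNodal β (j + 1) = partialNodal β j * (X - C (β ⟨j, hj⟩)) := by
  have hfilter : univ.filter (fun i : Fin K => (i : ℕ) < j + 1) =
      insert ⟨j, hj⟩ (univ.filter fun i : Fin K => (i : ℕ) < j) := by
    ext i
    simp only [mem_filter_univ, mem_insert, Fin.ext_iff]
    lia
  rw [partialNodal, hfilter, Lagrange.nodal_insert_eq_nodal (by simp), mul_comm, partialNodal]

lemma monic_partialNodal (β : Fin K → ℝ) (j : ℕ) : (partialNodal β j).Monic :=
  Lagrange.nodal_monic

lemma natDegree_partialNodal (β : Fin K → ℝ) {j : ℕ} (hj : j ≤ K) :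
    (partialNodal β j).natDegree = j := by
  rw [partialNodal, Lagrange.natDegree_nodal, Fin.card_filter_val_lt, min_eq_right hj]

lemma eval_partialNodal_nonneg_of_le {t : ℝ} (ht : ∀ i, β i ≤ t) (j : ℕ) :
    0 ≤ (partialNodal β j).eval t := by
  rw [eval_partialNodal]
  exact prod_nonneg fun i _ => sub_nonneg.mpr (ht i)

lemma eval_partialNodal_node_nonneg (hβ : Monotone β) (j : ℕ) (i : Fin K) :
    0 ≤ (partialNodal β j).eval (β i) := by
  rw [eval_partialNodal]
  by_cases hij : (i : ℕ) < j
  · rw [prod_eq_zero (i := i) (by simpa using hij) (sub_self _)]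
  · refine prod_nonneg fun l hl => sub_nonneg.mpr (hβ ?_)
    have hlj : (l : ℕ) < j := by simpa using hl
    exact Fin.le_def.mpr (by lia)

end Quadrature

section Gegenbauer

variable {n : ℕ} {P : ℕ → ℝ[X]}

lemma gegWeight_nonneg {t : ℝ} (ht : t ∈ Set.Icc (-1 : ℝ) 1) : 0 ≤ gegWeight n t :=
  Real.rpow_nonneg (by nlinarith [ht.1, ht.2]) _

lemma integrableOn_gegWeight (hn : 2 ≤ n) : IntegrableOn (gegWeight n) (Set.Icc (-1 : ℝ) 1) := by
  obtain rfl | hn := hn.eq_or_lt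
  · have h := (intervalIntegrable_iff_integrableOn_Icc_of_le (by norm_num : (-1 : ℝ) ≤ 1)).mp
      Polynomial.Chebyshev.intervalIntegrable_sqrt_one_sub_sq_inv
    refine h.congr_fun (fun t ht => ?_) measurableSet_Icc
    have ht0 : 0 ≤ 1 - t ^ 2 := by nlinarith [ht.1, ht.2]
    beta_reduce
    rw [gegWeight, Real.sqrt_eq_rpow, Real.inv_rpow ht0, ← Real.rpow_neg ht0]
    norm_num
  · have hn' : (3 : ℝ) ≤ n := mod_cast hn
    refine ContinuousOn.integrableOn_Icc (ContinuousOn.rpow_const (by fun_prop) fun t _ => ?_)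
    exact Or.inr (by linarith)

lemma integrableOn_eval_mul_gegWeight (hn : 2 ≤ n) (p : ℝ[X]) :
    IntegrableOn (fun t => p.eval t * gegWeight n t) (Set.Icc (-1 : ℝ) 1) :=
  (integrableOn_gegWeight hn).continuousOn_mul p.continuousOn isCompact_Icc

/-- Integration of polynomials against `μ_n`. The bound on `n` makes `gegWeight n` integrable, which
linearity of the Bochner integral requires. -/
noncomputable def gegFunctional (n : ℕ) (hn : 2 ≤ n) : MomentFunctional ℝ where
  toFun p := gegInt n (fun t => p.eval t)
  map_add' p q := by
    simp only [gegInt, eval_add, add_mul]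
    rw [integral_add (integrableOn_eval_mul_gegWeight hn p) (integrableOn_eval_mul_gegWeight hn q),
      mul_add]
  map_smul' c p := by
    simp only [gegInt, eval_smul, smul_eq_mul, mul_assoc, RingHom.id_apply]
    rw [integral_const_mul, mul_left_comm]

lemma gegFunctional_apply (hn : 2 ≤ n) (p : ℝ[X]) :
    gegFunctional n hn p = gegInt n (fun t => p.eval t) := rfl

lemma gegFunctional_mul (hn : 2 ≤ n) (p q : ℝ[X]) :
    gegFunctional n hn (p * q) = gegInt n (fun t => p.eval t * q.eval t) := by
  simp only [gegFunctional_apply, eval_mul]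

lemma gegFunctional_isPosSemidef (hn : 2 ≤ n) : (gegFunctional n hn).IsPosSemidef := by
  intro f
  rw [gegFunctional_mul]
  exact mul_nonneg
    (inv_nonneg.mpr (setIntegral_nonneg measurableSet_Icc fun _ ht => gegWeight_nonneg ht))
    (setIntegral_nonneg measurableSet_Icc fun _ ht =>
      mul_nonneg (mul_self_nonneg _) (gegWeight_nonneg ht))

lemma IsGegenbauer.degree_eq (hP : IsGegenbauer n P) (i : ℕ) : (P i).degree = i := by
  have hne : P i ≠ 0 := fun h => by simpa [h] using hP.2.1 i
  rw [degree_eq_natDegree hne, hP.1]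

lemma IsGegenbauer.orthogonalBelow (hn : 2 ≤ n) (hP : IsGegenbauer n P) (m : ℕ) :
    (gegFunctional n hn).OrthogonalBelow m (P m) :=
  .of_forall_lt_degree_eq hP.degree_eq fun i hi => by
    rw [gegFunctional_mul, hP.2.2 m i hi.ne']

lemma eval_mem_lambdaSpace_of_natDegree_lt (hn : 2 ≤ n) (hP : IsGegenbauer n P) {k : ℕ} {p : ℝ[X]}
    (hp : p.natDegree < 2 * k) : (fun t => p.eval t) ∈ LambdaSpace n k P := by
  have horth : ∀ i, 2 * k ≤ i → gegInt n (fun t => p.eval t * (P i).eval t) = 0 := fun i hi => by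
    rw [← gegFunctional_mul hn, mul_comm]
    exact hP.orthogonalBelow hn i p
      (degree_le_natDegree.trans_lt (Nat.cast_lt.mpr (hp.trans_le hi)))
  exact ⟨p, ⟨by lia, horth _ le_rfl, horth _ (Nat.le_succ _)⟩, rfl⟩

variable {K k : ℕ} {N : ℝ} {β θ : Fin K → ℝ} {Λ : Set (ℝ → ℝ)}

lemma IsQuadratureRule.isOrthogonalPolynomial (hn : 2 ≤ n) (hN : 0 < N) (hP : IsGegenbauer n P)
    (hquad : IsQuadratureRule n N β θ Λ)
    (hΛ : ∀ p : ℝ[X], p.natDegree < 2 * k → (fun t => p.eval t) ∈ Λ) {m : ℕ} (hm : m ≤ k) :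
    (quadratureFunctional N β θ).IsOrthogonalPolynomial (P m) := by
  obtain ⟨-, hβ1, -, hθ, hexact⟩ := hquad
  have horth : (quadratureFunctional N β θ).OrthogonalBelow (P m).natDegree (P m) := by
    rw [hP.1]
    refine (hP.orthogonalBelow hn m).congr_of_natDegree_lt (hP.1 m).le fun f hf => ?_
    rw [gegFunctional_apply, quadratureFunctional_apply]
    exact hexact _ (hΛ f (by lia))
  refine ⟨horth.leadingCoeff_pos (a := 1) ?_ ?_ ?_, horth⟩
  · exact quadratureFunctional_withDensity_isPosSemidef hN.le (fun i => (hθ i).le) (by simp)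
      fun i => by simpa using (hβ1 i).le
  · exact fun f hf => quadratureFunctional_mul_self_pos hN (fun i => (hθ i).le) hf
  · rw [hP.2.1]
    exact one_pos

theorem stmt_14_general (hn : 2 ≤ n) (hN : 0 < N) (hP : IsGegenbauer n P)
    (hquad : IsQuadratureRule n N β θ Λ)
    (hΛ : ∀ p : ℝ[X], p.natDegree < 2 * k → (fun t => p.eval t) ∈ Λ) {j : ℕ} (hjk : j ≤ k)
    (hjK : j ≤ K) (m : ℕ) :
    0 ≤ gegInt n (fun t =>
      (∏ i ∈ univ.filter (fun i : Fin K => (i : ℕ) < j), (t - β i)) * (P m).eval t) := by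
  have hqj := natDegree_partialNodal β hjK
  simp only [← eval_partialNodal]
  rw [← gegFunctional_mul hn]
  obtain hjm | hmj := lt_or_ge j m
  · rw [mul_comm, hP.orthogonalBelow hn m _ 
      (degree_le_natDegree.trans_lt (Nat.cast_lt.mpr (hqj.trans_lt hjm)))]
  have hPm := hquad.isOrthogonalPolynomial hn hN hP hΛ (hmj.trans hjk)
  obtain rfl | hmj := hmj.eq_or_lt
  · have hPm' : (gegFunctional n hn).IsOrthogonalPolynomial (P m) :=
      ⟨hPm.leadingCoeff_pos, (hP.1 m).symm ▸ hP.orthogonalBelow hn m⟩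
    rw [mul_comm]
    exact hPm'.apply_mul_nonneg_of_natDegree_eq (gegFunctional_isPosSemidef hn)
      (hqj.trans (hP.1 m).symm) (by simp [(monic_partialNodal β m).leadingCoeff])
  · obtain ⟨-, hβ1, hmono, hθ, hexact⟩ := hquad
    have hdeg : (partialNodal β j * P m).natDegree < 2 * k :=
      natDegree_mul_le.trans_lt (by rw [hqj, hP.1]; lia)
    have hGL : gegFunctional n hn (partialNodal β j * P m) =
        quadratureFunctional N β θ (partialNodal β j * P m) := by
      rw [gegFunctional_apply, quadratureFunctional_apply]
      exact hexact _ (hΛ _ hdeg)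
    rw [hGL]
    exact hPm.apply_mul_nonneg_of_chain (partialNodal_zero β)
      (fun i hi => ⟨_, partialNodal_succ β (hi.trans_le hjK)⟩)
      fun i _ => quadratureFunctional_withDensity_isPosSemidef hN.le (fun l => (hθ l).le)
        (eval_partialNodal_nonneg_of_le (fun l => (hβ1 l).le) i)
        (eval_partialNodal_node_nonneg hmono.monotone i)

end Gegenbauer

/-- the partial products `q_j`, `j ≤ k-2`, are positive definite. -/
theorem stmt_14 (n : ℕ) (hn : 2 ≤ n) (k : ℕ) (hk : 2 ≤ k) (N : ℝ) (hN : 0 < N)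
    (P : ℕ → Polynomial ℝ) (hP : IsGegenbauer n P)
    (β θ : Fin (k + 1) → ℝ)
    (hquad : IsQuadratureRule n N β θ (LambdaSpace n k P)) :
    ∀ j ≤ k - 2, ∀ m : ℕ,
      0 ≤ gegInt n (fun t =>
        (∏ i ∈ Finset.univ.filter (fun i : Fin (k + 1) => (i : ℕ) < j), (t - β i)) *
          (P m).eval t) := by
  exact fun j hj m => stmt_14_general hn hN hP hquad
    (fun _ hp => eval_mem_lambdaSpace_of_natDegree_lt hn hP hp)
    (hj.trans (Nat.sub_le k 2)) (by lia) m
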